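/- Let Q ⊂ ℙ²(ℂ) be the smooth conic x² + y² − z² = 0 and L the line z = 0, which meets Q in the two points (1:i:0) and (1:−i:0). Set Q⁰ = Q \ L and L⁰ = L \ Q. Then the maps φ₁ : ℂ* → Q⁰, φ₁(s) = (1+s² : i(1−s²) : 2s), and φ₂ : ℂ* → L⁰, φ₂(s) = (1−s : i(1+s) : 0), are bijections, and for all s, t ∈ ℂ* with s ≠ t and all u ∈ ℂ*, the three points φ₁(s), φ₁(t), φ₂(u) are collinear if and only if u = s·t. (Thus collinearity gives a pairing Q⁰ × Q⁰ → L⁰ corresponding to multiplication in ℂ*.) -/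

import Mathlib

/-- The complex projective plane ℙ²(ℂ) = ℙ(ℂ³). -/
abbrev P2 : Type := Projectivization ℂ (Fin 3 → ℂ)

/-- Three points of ℙ²(ℂ) are collinear if representative vectors in ℂ³ span a linear
subspace of dimension at most 2. -/
def Collin (p q r : P2) : Prop :=
  Module.finrank ℂ (Submodule.span ℂ {p.rep, q.rep, r.rep} : Submodule ℂ (Fin 3 → ℂ)) ≤ 2

lemma vec_ne_zero {a b c : ℂ} (h : a ≠ 0 ∨ b ≠ 0 ∨ c ≠ 0) : ![a, b, c] ≠ 0 := by
  intro hz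
  rcases h with h | h | h
  · exact h (by simpa using congrFun hz 0)
  · exact h (by simpa using congrFun hz 1)
  · exact h (by simpa using congrFun hz 2)

/-- The smooth conic x² + y² − z² = 0 in ℙ²(ℂ). -/
def conicQ : Set P2 := {p | p.rep 0 ^ 2 + p.rep 1 ^ 2 - p.rep 2 ^ 2 = 0}

/-- The line z = 0 in ℙ²(ℂ). -/
def lineZ : Set P2 := {p | p.rep 2 = 0}

/-- The parametrization φ₁(s) = (1+s² : i(1−s²) : 2s) of Q⁰ = Q \ L. -/
noncomputable def conicParam (s : ℂˣ) : P2 :=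
  Projectivization.mk ℂ ![1 + (s : ℂ) ^ 2, Complex.I * (1 - (s : ℂ) ^ 2), 2 * (s : ℂ)]
    (vec_ne_zero (Or.inr (Or.inr (mul_ne_zero two_ne_zero s.ne_zero))))

/-- The parametrization φ₂(s) = (1−s : i(1+s) : 0) of L⁰ = L \ Q. -/
noncomputable def lineZParam (s : ℂˣ) : P2 :=
  Projectivization.mk ℂ ![1 - (s : ℂ), Complex.I * (1 + (s : ℂ)), 0] (by
    intro hz
    have h0 : (1 : ℂ) - (s : ℂ) = 0 := by simpa using congrFun hz 0
    have h1 : Complex.I * (1 + (s : ℂ)) = 0 := by simpa using congrFun hz 1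
    have hs : (s : ℂ) = 1 := by linear_combination -h0
    rw [hs] at h1
    simp [Complex.I_ne_zero] at h1)

lemma collin_iff_det (p q r : P2) :
    Collin p q r ↔ (Matrix.of ![p.rep, q.rep, r.rep]).det = 0 := by
  have h1 : LinearIndependent ℂ ![p.rep, q.rep, r.rep] ↔
      (Matrix.of ![p.rep, q.rep, r.rep]).det ≠ 0 := by
    rw [← isUnit_iff_ne_zero, ← Matrix.isUnit_iff_isUnit_det,
      ← Matrix.linearIndependent_rows_iff_isUnit]
    rfl
  have h2 := linearIndependent_iff_card_eq_finrank_span (R := ℂ) (b := ![p.rep, q.rep, r.rep])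
  have h3 := finrank_range_le_card (R := ℂ) ![p.rep, q.rep, r.rep]
  have hr : Set.range ![p.rep, q.rep, r.rep] = {p.rep, q.rep, r.rep} := by
    simp only [Matrix.range_cons, Matrix.range_empty, Set.union_empty, Set.singleton_union]
  rw [Set.finrank, hr, Fintype.card_fin] at h2 h3
  unfold Collin
  rw [← not_iff_not, ← ne_eq _ (0 : ℂ), ← h1, h2]
  omega

lemma conicParam_rep (s : ℂˣ) : ∃ a : ℂ, a ≠ 0 ∧ (conicParam s).rep 0 = a * (1 + (s : ℂ) ^ 2) ∧
    (conicParam s).rep 1 = a * (Complex.I * (1 - (s : ℂ) ^ 2)) ∧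
    (conicParam s).rep 2 = a * (2 * s) := by
  obtain ⟨a, ha⟩ := Projectivization.exists_smul_eq_mk_rep ℂ
    ![1 + (s : ℂ) ^ 2, Complex.I * (1 - (s : ℂ) ^ 2), 2 * (s : ℂ)]
    (vec_ne_zero (Or.inr (Or.inr (mul_ne_zero two_ne_zero s.ne_zero))))
  refine ⟨a, a.ne_zero, ?_, ?_, ?_⟩ <;> unfold conicParam <;> rw [← ha] <;>
    simp [Units.smul_def, mul_add]

lemma lineZParam_rep (s : ℂˣ) : ∃ a : ℂ, a ≠ 0 ∧ (lineZParam s).rep 0 = a * (1 - (s : ℂ)) ∧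
    (lineZParam s).rep 1 = a * (Complex.I * (1 + (s : ℂ))) ∧
    (lineZParam s).rep 2 = 0 := by
  have hv : ![1 - (s : ℂ), Complex.I * (1 + (s : ℂ)), 0] ≠ 0 := by
    intro hz
    have h0 : (1 : ℂ) - (s : ℂ) = 0 := by simpa using congrFun hz 0
    have h1 : Complex.I * (1 + (s : ℂ)) = 0 := by simpa using congrFun hz 1
    have hs : (s : ℂ) = 1 := by linear_combination -h0
    rw [hs] at h1
    simp [Complex.I_ne_zero] at h1
  obtain ⟨a, ha⟩ := Projectivization.exists_smul_eq_mk_rep ℂ _ hv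
  refine ⟨a, a.ne_zero, ?_, ?_, ?_⟩ <;> unfold lineZParam <;> rw [← ha] <;>
    simp [Units.smul_def, mul_add]

/-- φ₁ and φ₂ are bijections of ℂ* onto Q⁰ and L⁰ respectively, and for
s ≠ t and any u, the points φ₁ s, φ₁ t, φ₂ u are collinear iff u = s·t: collinearity
gives a pairing Q⁰ × Q⁰ → L⁰ corresponding to multiplication in ℂ*. -/
theorem conic_plus_secant_line_pairing :
    Function.Injective conicParam ∧ Set.range conicParam = conicQ \ lineZ ∧
    Function.Injective lineZParam ∧ Set.range lineZParam = lineZ \ conicQ ∧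
      ∀ s t : ℂˣ, s ≠ t → ∀ u : ℂˣ,
        (Collin (conicParam s) (conicParam t) (lineZParam u) ↔ u = s * t) := by
  have hI : Complex.I ^ 2 = -1 := Complex.I_sq
  refine ⟨?_, ?_, ?_, ?_, ?_⟩
  · intro s t h
    obtain ⟨a, ha, a0, a1, a2⟩ := conicParam_rep s
    obtain ⟨b, hb, b0, b1, b2⟩ := conicParam_rep t
    rw [h] at a0 a1 a2
    rw [b0] at a0
    rw [b1] at a1
    rw [b2] at a2
    have hab : b = a := by
      linear_combination (a0 - Complex.I * a1) / 2 + (b * (1 - (t:ℂ)^2) - a * (1 - (s:ℂ)^2)) / 2 * hI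
    subst hab
    ext
    apply mul_left_cancel₀ hb
    linear_combination -a2 / 2
  · ext p
    constructor
    · rintro ⟨s, rfl⟩
      obtain ⟨a, ha, a0, a1, a2⟩ := conicParam_rep s
      refine ⟨?_, ?_⟩
      · simp only [conicQ, Set.mem_ofPred_eq, a0, a1, a2]
        linear_combination a ^ 2 * (1 - (s:ℂ)^2) ^ 2 * hI
      · simp only [lineZ, Set.mem_ofPred_eq, a2]
        exact mul_ne_zero ha (mul_ne_zero two_ne_zero s.ne_zero)
    · rintro ⟨hQ, hL⟩
      simp only [conicQ, lineZ, Set.mem_ofPred_eq] at hQ hL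
      have hprod : (p.rep 0 + Complex.I * p.rep 1) * (p.rep 0 - Complex.I * p.rep 1)
          = p.rep 2 ^ 2 := by linear_combination hQ - p.rep 1 ^ 2 * hI
      have hne : (p.rep 0 + Complex.I * p.rep 1) * (p.rep 0 - Complex.I * p.rep 1) ≠ 0 := by
        rw [hprod]; exact pow_ne_zero 2 hL
      have hp := left_ne_zero_of_mul hne
      have hm := right_ne_zero_of_mul hne
      refine ⟨Units.mk0 ((p.rep 0 + Complex.I * p.rep 1) / p.rep 2) (div_ne_zero hp hL), ?_⟩
      unfold conicParam
      conv_rhs => rw [← p.mk_rep]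
      symm
      rw [Projectivization.mk_eq_mk_iff']
      generalize p.rep = v at *
      obtain ⟨s, hs⟩ : ∃ s, s = (v 0 + Complex.I * v 1) / v 2 := ⟨_, rfl⟩
      have hsz : s * v 2 = v 0 + Complex.I * v 1 := by rw [hs]; field_simp
      have h1 : s * (v 0 - Complex.I * v 1) = v 2 := by
        apply mul_right_cancel₀ hL
        linear_combination hprod + (v 0 - Complex.I * v 1) * hsz
      refine ⟨(v 0 - Complex.I * v 1) / 2, ?_⟩
      simp only [Units.val_mk0, ← hs]
      ext i
      fin_cases i <;> simp
      · linear_combination s / 2 * h1 + hsz / 2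
      · linear_combination -Complex.I * s / 2 * h1 - Complex.I * hsz / 2 - v 1 * hI
      · linear_combination h1
  · intro s t h
    obtain ⟨a, ha, a0, a1, a2⟩ := lineZParam_rep s
    obtain ⟨b, hb, b0, b1, b2⟩ := lineZParam_rep t
    rw [h] at a0 a1 a2
    rw [b0] at a0
    rw [b1] at a1
    have hab : b = a := by
      linear_combination (a0 - Complex.I * a1) / 2 + (b * (1 + (t:ℂ)) - a * (1 + (s:ℂ))) / 2 * hI
    subst hab
    ext
    apply mul_left_cancel₀ hb
    linear_combination a0
  · ext p
    constructor
    · rintro ⟨s, rfl⟩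
      obtain ⟨a, ha, a0, a1, a2⟩ := lineZParam_rep s
      refine ⟨a2, ?_⟩
      simp only [conicQ, Set.mem_ofPred_eq, a0, a1, a2]
      intro h
      have : a ^ 2 * (4 * (s : ℂ)) = 0 := by
        linear_combination -h + a ^ 2 * (1 + (s:ℂ)) ^ 2 * hI
      exact mul_ne_zero (pow_ne_zero 2 ha) (mul_ne_zero (by norm_num) s.ne_zero) this
    · rintro ⟨hL, hQ⟩
      simp only [conicQ, lineZ, Set.mem_ofPred_eq] at hQ hL
      have hne : (p.rep 0 + Complex.I * p.rep 1) * (p.rep 0 - Complex.I * p.rep 1) ≠ 0 := by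
        intro h
        apply hQ
        linear_combination h + p.rep 1 ^ 2 * hI - p.rep 2 * hL
      have hp := left_ne_zero_of_mul hne
      have hm := right_ne_zero_of_mul hne
      refine ⟨Units.mk0 (-(p.rep 0 + Complex.I * p.rep 1) / (p.rep 0 - Complex.I * p.rep 1))
        (div_ne_zero (neg_ne_zero.mpr hp) hm), ?_⟩
      unfold lineZParam
      conv_rhs => rw [← p.mk_rep]
      symm
      rw [Projectivization.mk_eq_mk_iff']
      generalize p.rep = v at *
      obtain ⟨s, hs⟩ : ∃ s, s = -(v 0 + Complex.I * v 1) / (v 0 - Complex.I * v 1) := ⟨_, rfl⟩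
      have h1 : s * (v 0 - Complex.I * v 1) = -(v 0 + Complex.I * v 1) := by
        rw [hs]; field_simp
      refine ⟨(v 0 - Complex.I * v 1) / 2, ?_⟩
      simp only [Units.val_mk0, ← hs]
      ext i
      fin_cases i <;> simp
      · linear_combination -h1 / 2
      · linear_combination Complex.I * h1 / 2 - v 1 * hI
      · exact hL.symm
  · intro s t hst u
    obtain ⟨a, ha, a0, a1, a2⟩ := conicParam_rep s
    obtain ⟨b, hb, b0, b1, b2⟩ := conicParam_rep t
    obtain ⟨c, hc, c0, c1, c2⟩ := lineZParam_rep u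
    have hst' : (s : ℂ) - t ≠ 0 := sub_ne_zero.mpr fun h => hst (Units.ext h)
    have hdet : (Matrix.of ![(conicParam s).rep, (conicParam t).rep, (lineZParam u).rep]).det
        = a * b * c * (4 * Complex.I) * ((s : ℂ) - t) * ((u : ℂ) - s * t) := by
      rw [Matrix.det_fin_three]
      simp [a0, a1, a2, b0, b1, b2, c0, c1, c2]
      ring
    rw [collin_iff_det, hdet]
    have hk : a * b * c * (4 * Complex.I) * ((s : ℂ) - t) ≠ 0 := by
      simp [ha, hb, hc, hst', Complex.I_ne_zero]
    rw [mul_eq_zero, or_iff_right hk, sub_eq_zero, Units.ext_iff, Units.val_mul]
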